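/- There exists a constant C > 0 such that for every R ≥ 0 and every φ ∈ H¹(ℝ², ℂ), the function w'φ := ‖K_R ∗ |φ|²‖² φ + 2 ( K_R ∗ ( (K_R ∗ |φ|²) |φ|² ) ) φ satisfies ‖w'φ‖₂ ≤ C ‖φ‖_{H¹}⁵. (Here ‖K_R ∗ |φ|²‖² is the pointwise squared Euclidean norm of the vector field K_R ∗ |φ|², and in the second term the convolution K_R ∗ ((K_R∗|φ|²)|φ|²) is the scalar function obtained by convolving each component of K_R with the corresponding component of the vector field (K_R∗|φ|²)|φ|² and summing.) -/

import Mathlib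

noncomputable section
open MeasureTheory ENNReal
open scoped RealInnerProductSpace

/-- The plane `ℝ²`. -/
abbrev E2 : Type := EuclideanSpace ℝ (Fin 2)

/-- The rotation by 90 degrees: `x^⊥ = (-x₂, x₁)`. -/
def perp (x : E2) : E2 := (WithLp.equiv 2 (Fin 2 → ℝ)).symm ![-(x 1), x 0]

/-- The Aharonov–Bohm kernel `K_R(x) = x^⊥ / (max R ‖x‖)²` (with `K_R 0 = 0`,
also when `R = 0`, by the junk-value convention `(0 : ℝ)⁻¹ = 0`). -/
def K (R : ℝ) (x : E2) : E2 := ((max R ‖x‖) ^ 2)⁻¹ • perp x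

/-- The standard basis of `ℝ²`. -/
def e2 (j : Fin 2) : E2 := EuclideanSpace.single j 1

/-- Componentwise convolution of the vector kernel `K_R` with a scalar density. -/
def convKs (R : ℝ) (ρ : E2 → ℝ) (x : E2) : E2 := ∫ y, ρ y • K R (x - y)

/-- Convolution of the vector kernel `K_R` with a vector field, summed over components. -/
def convKv (R : ℝ) (F : E2 → E2) (x : E2) : ℝ := ∫ y, ⟪K R (x - y), F y⟫

/-- The current `J[u] = i(u∇ū - ū∇u) = 2 Im(ū ∇u)`, an `ℝ²`-valued function. -/
def Jf (u : E2 → ℂ) (x : E2) : E2 :=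
  (WithLp.equiv 2 (Fin 2 → ℝ)).symm fun j =>
    2 * ((starRingEnd ℂ) (u x) * fderiv ℝ u x (e2 j)).im

/-- The `H¹` norm `(‖u‖₂² + ‖∇u‖₂²)^{1/2}` (extended-real valued). -/
def H1 (u : E2 → ℂ) : ℝ≥0∞ :=
  (eLpNorm u 2 volume ^ 2 + eLpNorm (fun x => fderiv ℝ u x) 2 volume ^ 2) ^ (1 / 2 : ℝ)

/-- The `H²` norm `(‖u‖₂² + ‖∇u‖₂² + ‖∇²u‖₂²)^{1/2}` (extended-real valued). -/
def H2 (u : E2 → ℂ) : ℝ≥0∞ :=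
  (eLpNorm u 2 volume ^ 2 + eLpNorm (fun x => fderiv ℝ u x) 2 volume ^ 2
    + eLpNorm (fun x => fderiv ℝ (fderiv ℝ u) x) 2 volume ^ 2) ^ (1 / 2 : ℝ)

/-!
Every kernel with `‖k z‖ ≤ ‖z‖⁻¹` is controlled by the Hardy-type inequality
`∫ ‖φ y‖² / ‖x - y‖ dy ≤ 3 ‖φ‖²_{H¹}`, uniform in `x` and valid in every dimension `d ≥ 2`. Hence
`k ∗ |φ|²` is bounded by `3 ‖φ‖²_{H¹}`, and convolving the field `|φ|² (k ∗ |φ|²)` with `k` once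
more costs another such factor, so that `w'` multiplies `φ` by a potential bounded by
`(1 + 2) · (3 ‖φ‖²_{H¹})² = 27 ‖φ‖⁴_{H¹}`. In polar coordinates the Hardy inequality becomes
`∫ r^m |u|² ≤ 3 ∫ r^(m+1) (|u|² + |u'|²)` with `m = d - 2`, which is trivial for `r > 1` and follows
on `[0, 1]` by integrating the derivative of `r^(m+1) (1 - r) |u|²`.
-/

section Radial

lemma enorm_sq_norm_add_sq_norm {F : Type*} [NormedAddCommGroup F] (a b : F) :
    ‖‖a‖ ^ 2 + ‖b‖ ^ 2‖ₑ = ‖a‖ₑ ^ 2 + ‖b‖ₑ ^ 2 := by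
  rw [Real.enorm_of_nonneg (by positivity), ENNReal.ofReal_add (by positivity) (by positivity),
    ENNReal.ofReal_pow (norm_nonneg _), ENNReal.ofReal_pow (norm_nonneg _), ofReal_norm,
    ofReal_norm]

variable {F : Type*} [NormedAddCommGroup F] [InnerProductSpace ℝ F] {u : ℝ → F}

lemma abs_two_mul_real_inner_le_sq_add_sq (a b : F) : |2 * ⟪a, b⟫| ≤ ‖a‖ ^ 2 + ‖b‖ ^ 2 := by
  rw [abs_mul, abs_two]
  linarith [abs_real_inner_le_norm a b, two_mul_le_add_sq ‖a‖ ‖b‖]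

lemma integral_pow_mul_sq_norm_le (m : ℕ) (hu : Differentiable ℝ u)
    (hw : IntervalIntegrable (fun r ↦ r ^ (m + 1) * (‖u r‖ ^ 2 + ‖deriv u r‖ ^ 2)) volume 0 1) :
    ∫ r in (0 : ℝ)..1, r ^ m * ‖u r‖ ^ 2
      ≤ 3 * ∫ r in (0 : ℝ)..1, r ^ (m + 1) * (‖u r‖ ^ 2 + ‖deriv u r‖ ^ 2) := by
  have hcont : Continuous u := hu.continuous
  have hv : IntervalIntegrable (fun r ↦ r ^ m * ‖u r‖ ^ 2) volume 0 1 :=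
    Continuous.intervalIntegrable (by fun_prop) _ _
  have hderiv (r : ℝ) : HasDerivAt (fun r ↦ r ^ (m + 1) * (1 - r) * ‖u r‖ ^ 2)
      (((m + 1) * r ^ m - (m + 2) * r ^ (m + 1)) * ‖u r‖ ^ 2
        + r ^ (m + 1) * (1 - r) * (2 * ⟪u r, deriv u r⟫)) r := by
    refine (((hasDerivAt_pow (m + 1) r).mul ((hasDerivAt_id' r).const_sub 1)).congr_deriv ?_).mul
      (hu r).hasDerivAt.norm_sq
    push_cast [Nat.add_sub_cancel]
    ring
  have hlower (r : ℝ) (hr : r ∈ Set.Ioo (0 : ℝ) 1) :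
      r ^ m * ‖u r‖ ^ 2 - 3 * (r ^ (m + 1) * (‖u r‖ ^ 2 + ‖deriv u r‖ ^ 2))
        ≤ ((m + 1) * r ^ m - (m + 2) * r ^ (m + 1)) * ‖u r‖ ^ 2
          + r ^ (m + 1) * (1 - r) * (2 * ⟪u r, deriv u r⟫) := by
    obtain ⟨hr0, hr1⟩ := hr
    have : 0 ≤ 1 - r := by linarith
    have hcross : -(r ^ (m + 1) * (‖u r‖ ^ 2 + ‖deriv u r‖ ^ 2))
        ≤ r ^ (m + 1) * (1 - r) * (2 * ⟪u r, deriv u r⟫) := by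
      have hinner := (abs_le.1 (abs_two_mul_real_inner_le_sq_add_sq (u r) (deriv u r))).1
      have hsq : 0 ≤ r ^ (m + 2) * (‖u r‖ ^ 2 + ‖deriv u r‖ ^ 2) := by positivity
      have hweight : 0 ≤ r ^ (m + 1) * (1 - r) := by positivity
      linear_combination hsq + mul_le_mul_of_nonneg_left hinner hweight
    have hpow : 0 ≤ m * (r ^ m * (1 - r)) * ‖u r‖ ^ 2 := by positivity
    have hderiv_sq : 0 ≤ r ^ (m + 1) * ‖deriv u r‖ ^ 2 := by positivity
    linear_combination hcross + hpow + 2 * hderiv_sq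
  have hftc := intervalIntegral.integral_le_sub_of_hasDeriv_right_of_le zero_le_one
    (fun r _ ↦ (hderiv r).continuousAt.continuousWithinAt)
    (fun r _ ↦ (hderiv r).hasDerivWithinAt)
    ((intervalIntegrable_iff_integrableOn_Icc_of_le zero_le_one).1 (hv.sub (hw.const_mul 3))) hlower
  rw [intervalIntegral.integral_sub hv (hw.const_mul 3),
    intervalIntegral.integral_const_mul] at hftc
  simpa using hftc

variable [CompleteSpace F]

lemma lintegral_Ioc_pow_mul_sq_enorm_le (m : ℕ) (hu : Differentiable ℝ u) :
    ∫⁻ r in Set.Ioc (0 : ℝ) 1, ‖r‖ₑ ^ m * ‖u r‖ₑ ^ 2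
      ≤ 3 * ∫⁻ r in Set.Ioc (0 : ℝ) 1, ‖r‖ₑ ^ (m + 1) * (‖u r‖ₑ ^ 2 + ‖deriv u r‖ₑ ^ 2) := by
  set v : ℝ → ℝ := fun r ↦ r ^ m * ‖u r‖ ^ 2
  set w : ℝ → ℝ := fun r ↦ r ^ (m + 1) * (‖u r‖ ^ 2 + ‖deriv u r‖ ^ 2)
  have hcont : Continuous u := hu.continuous
  have hv_enorm (r : ℝ) : ‖r‖ₑ ^ m * ‖u r‖ₑ ^ 2 = ‖v r‖ₑ := by simp [v, enorm_mul, enorm_pow]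
  have hw_enorm (r : ℝ) : ‖r‖ₑ ^ (m + 1) * (‖u r‖ₑ ^ 2 + ‖deriv u r‖ₑ ^ 2) = ‖w r‖ₑ := by
    rw [enorm_mul, enorm_pow, enorm_sq_norm_add_sq_norm]
  have hw_meas : AEStronglyMeasurable w (volume.restrict (Set.Ioc 0 1)) := by
    have hderiv_meas : StronglyMeasurable (deriv u) := stronglyMeasurable_deriv u
    exact ((continuous_pow (m + 1)).stronglyMeasurable.mul
      ((hcont.norm.pow 2).stronglyMeasurable.add (hderiv_meas.norm.pow 2))).aestronglyMeasurable
  simp only [hv_enorm, hw_enorm]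
  by_cases hfin : ∫⁻ r in Set.Ioc (0 : ℝ) 1, ‖w r‖ₑ = ⊤
  · simp [hfin]
  have hw : IntegrableOn w (Set.Ioc 0 1) := ⟨hw_meas, lt_top_iff_ne_top.2 hfin⟩
  have hv : IntegrableOn v (Set.Ioc 0 1) :=
    (intervalIntegrable_iff_integrableOn_Ioc_of_le zero_le_one).1
      (Continuous.intervalIntegrable (by fun_prop) _ _)
  have hnorm {f : ℝ → ℝ} (hf : ∀ r, 0 < r → 0 ≤ f r) :
      ∫ r in Set.Ioc (0 : ℝ) 1, ‖f r‖ = ∫ r in (0 : ℝ)..1, f r := by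
    rw [intervalIntegral.integral_of_le zero_le_one]
    exact setIntegral_congr_fun measurableSet_Ioc fun r hr ↦ Real.norm_of_nonneg (hf r hr.1)
  rw [← ofReal_integral_norm_eq_lintegral_enorm hv, ← ofReal_integral_norm_eq_lintegral_enorm hw,
    hnorm fun r hr ↦ by positivity, hnorm fun r hr ↦ by positivity,
    ← ENNReal.ofReal_ofNat, ← ENNReal.ofReal_mul (by norm_num)]
  exact ENNReal.ofReal_le_ofReal (integral_pow_mul_sq_norm_le m hu
    ((intervalIntegrable_iff_integrableOn_Ioc_of_le zero_le_one).2 hw))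

lemma lintegral_Ioi_pow_mul_sq_enorm_le (m : ℕ) (hu : Differentiable ℝ u) :
    ∫⁻ r in Set.Ioi (0 : ℝ), ‖r‖ₑ ^ m * ‖u r‖ₑ ^ 2
      ≤ 3 * ∫⁻ r in Set.Ioi (0 : ℝ), ‖r‖ₑ ^ (m + 1) * (‖u r‖ₑ ^ 2 + ‖deriv u r‖ₑ ^ 2) := by
  have hfar : ∫⁻ r in Set.Ioi (1 : ℝ), ‖r‖ₑ ^ m * ‖u r‖ₑ ^ 2
      ≤ 3 * ∫⁻ r in Set.Ioi (1 : ℝ), ‖r‖ₑ ^ (m + 1) * (‖u r‖ₑ ^ 2 + ‖deriv u r‖ₑ ^ 2) := by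
    refine (setLIntegral_mono' measurableSet_Ioi fun r hr ↦ ?_).trans (le_mul_of_one_le_left' ?_)
    · have hr' : 1 ≤ ‖r‖ₑ := by
        rw [Real.enorm_of_nonneg (zero_le_one.trans (le_of_lt hr))]
        exact ENNReal.one_le_ofReal.2 (le_of_lt hr)
      gcongr
      · exact Nat.le_succ m
      · exact le_self_add
    · norm_num
  rw [← Set.Ioc_union_Ioi_eq_Ioi (zero_le_one (α := ℝ)),
    lintegral_union measurableSet_Ioi (Set.Ioc_disjoint_Ioi le_rfl),
    lintegral_union measurableSet_Ioi (Set.Ioc_disjoint_Ioi le_rfl), mul_add]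
  exact add_le_add (lintegral_Ioc_pow_mul_sq_enorm_le m hu) hfar

end Radial

section Sobolev

lemma eLpNorm_two_sq {α G : Type*} [MeasurableSpace α] [NormedAddCommGroup G] {μ : Measure α}
    (f : α → G) : eLpNorm f 2 μ ^ 2 = ∫⁻ x, ‖f x‖ₑ ^ 2 ∂μ := by
  simpa using eLpNorm_nnreal_pow_eq_lintegral (f := f) (μ := μ) (two_ne_zero (α := NNReal))

variable {E F : Type*} [NormedAddCommGroup E] [NormedSpace ℝ E] [MeasurableSpace E]
  [NormedAddCommGroup F] [NormedSpace ℝ F] {φ : E → F} {μ : Measure E}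

/-- The `H¹` norm `(‖φ‖₂² + ‖∇φ‖₂²)^{1/2}` of a vector-valued function; the derivative is the
classical one, measured in operator norm. -/
def sobolevNorm (φ : E → F) (μ : Measure E) : ℝ≥0∞ :=
  (eLpNorm φ 2 μ ^ 2 + eLpNorm (fderiv ℝ φ) 2 μ ^ 2) ^ (1 / 2 : ℝ)

lemma sobolevNorm_sq :
    sobolevNorm φ μ ^ 2 = eLpNorm φ 2 μ ^ 2 + eLpNorm (fderiv ℝ φ) 2 μ ^ 2 := by
  rw [sobolevNorm, ← ENNReal.rpow_natCast, ← ENNReal.rpow_mul]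
  norm_num

lemma eLpNorm_le_sobolevNorm : eLpNorm φ 2 μ ≤ sobolevNorm φ μ := by
  rw [← ENNReal.pow_le_pow_left_iff two_ne_zero, sobolevNorm_sq]
  exact le_self_add

lemma lintegral_sq_enorm_add_sq_enorm_fderiv [OpensMeasurableSpace E] (hφ : Continuous φ) :
    ∫⁻ x, (‖φ x‖ₑ ^ 2 + ‖fderiv ℝ φ x‖ₑ ^ 2) ∂μ = sobolevNorm φ μ ^ 2 := by
  rw [sobolevNorm_sq, eLpNorm_two_sq, eLpNorm_two_sq,
    lintegral_add_left (hφ.enorm.measurable.pow_const 2)]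

end Sobolev

section Hardy

variable {E : Type*} [NormedAddCommGroup E] [NormedSpace ℝ E] [FiniteDimensional ℝ E]
  [MeasurableSpace E] [BorelSpace E]

lemma lintegral_eq_lintegral_sphere_lintegral_Ioi [Nontrivial E] (μ : Measure E)
    [μ.IsAddHaarMeasure] {f : E → ℝ≥0∞} (hf : Measurable f) :
    ∫⁻ x, f x ∂μ = ∫⁻ θ, ∫⁻ r in Set.Ioi (0 : ℝ),
      ‖r‖ₑ ^ (Module.finrank ℝ E - 1) * f (r • (θ : E)) ∂volume ∂μ.toSphere := by
  have hpolar : ∫⁻ x, f x ∂μ = ∫⁻ p, f ((p.2 : ℝ) • (p.1 : E))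
      ∂(μ.toSphere.prod (Measure.volumeIoiPow (Module.finrank ℝ E - 1))) := by
    rw [← μ.measurePreserving_homeomorphUnitSphereProd.lintegral_comp_emb
      (Homeomorph.measurableEmbedding _)]
    nth_rw 1 [← restrict_compl_singleton (μ := μ) (0 : E)]
    rw [← lintegral_subtype_comap (measurableSet_singleton _).compl f]
    refine lintegral_congr fun x ↦ congrArg f ?_
    have hx : (x : E) ≠ 0 := x.2
    simp [smul_smul, mul_inv_cancel₀ (norm_ne_zero_iff.2 hx)]
  rw [hpolar, lintegral_prod _ (by fun_prop)]
  refine lintegral_congr fun θ ↦ ?_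
  rw [Measure.volumeIoiPow, lintegral_withDensity_eq_lintegral_mul _ (by fun_prop) (by fun_prop),
    ← lintegral_subtype_comap measurableSet_Ioi]
  refine lintegral_congr fun r ↦ ?_
  rw [Pi.mul_apply, ← enorm_pow, Real.enorm_of_nonneg (pow_nonneg r.2.le _)]

variable {F : Type*} [NormedAddCommGroup F] [InnerProductSpace ℝ F] [CompleteSpace F]
  {φ : E → F} {μ : Measure E} [μ.IsAddHaarMeasure]

lemma lintegral_sq_enorm_mul_inv_enorm_le (hE : 2 ≤ Module.finrank ℝ E)
    (hφ : Differentiable ℝ φ) :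
    ∫⁻ z, ‖φ z‖ₑ ^ 2 * ‖z‖ₑ⁻¹ ∂μ ≤ 3 * sobolevNorm φ μ ^ 2 := by
  obtain ⟨m, hm⟩ : ∃ m, Module.finrank ℝ E - 1 = m + 1 := ⟨Module.finrank ℝ E - 2, by lia⟩
  have : Nontrivial E := Module.nontrivial_of_finrank_pos (R := ℝ) (by lia)
  have hφ_meas : Measurable fun z ↦ ‖φ z‖ₑ := hφ.continuous.enorm.measurable
  rw [← lintegral_sq_enorm_add_sq_enorm_fderiv hφ.continuous,
    lintegral_eq_lintegral_sphere_lintegral_Ioi μ (by fun_prop),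
    lintegral_eq_lintegral_sphere_lintegral_Ioi μ (by fun_prop),
    ← lintegral_const_mul' _ _ (by simp), hm]
  refine lintegral_mono fun θ ↦ ?_
  have hθ : ‖(θ : E)‖ₑ = 1 := by simp [← ofReal_norm]
  have hderiv (r : ℝ) :
      HasDerivAt (fun r : ℝ ↦ φ (r • (θ : E))) (fderiv ℝ φ (r • (θ : E)) θ) r := by
    have hline : HasDerivAt (fun r : ℝ ↦ r • (θ : E)) (θ : E) r := by
      simpa using (hasDerivAt_id r).smul_const (θ : E)
    exact (hφ _).hasFDerivAt.comp_hasDerivAt r hline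
  calc ∫⁻ r in Set.Ioi (0 : ℝ), ‖r‖ₑ ^ (m + 1) * (‖φ (r • (θ : E))‖ₑ ^ 2 * ‖r • (θ : E)‖ₑ⁻¹)
      = ∫⁻ r in Set.Ioi (0 : ℝ), ‖r‖ₑ ^ m * ‖φ (r • (θ : E))‖ₑ ^ 2 := by
        refine setLIntegral_congr_fun measurableSet_Ioi fun r hr ↦ ?_
        have hr' : ‖r‖ₑ * ‖r‖ₑ⁻¹ = 1 :=
          ENNReal.mul_inv_cancel (enorm_ne_zero.2 (ne_of_gt hr)) enorm_ne_top
        simp only [enorm_smul, hθ, mul_one]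
        rw [pow_succ, mul_mul_mul_comm, hr', mul_one]
    _ ≤ _ := lintegral_Ioi_pow_mul_sq_enorm_le m fun r ↦ (hderiv r).differentiableAt
    _ ≤ _ := by
        gcongr with r
        rw [(hderiv r).deriv]
        simpa [hθ] using (fderiv ℝ φ (r • (θ : E))).le_opENorm θ

lemma lintegral_sq_enorm_mul_inv_enorm_sub_le (hE : 2 ≤ Module.finrank ℝ E)
    (hφ : Differentiable ℝ φ) (x : E) :
    ∫⁻ y, ‖φ y‖ₑ ^ 2 * ‖x - y‖ₑ⁻¹ ∂μ ≤ 3 * sobolevNorm φ μ ^ 2 := by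
  have htranslate : sobolevNorm (fun z ↦ φ (z + x)) μ ^ 2 = sobolevNorm φ μ ^ 2 := by
    have hφx : Continuous fun z ↦ φ (z + x) := hφ.continuous.comp (by fun_prop)
    rw [← lintegral_sq_enorm_add_sq_enorm_fderiv hφ.continuous,
      ← lintegral_sq_enorm_add_sq_enorm_fderiv hφx]
    simp only [fderiv_comp_add_right]
    exact lintegral_add_right_eq_self (fun z ↦ ‖φ z‖ₑ ^ 2 + ‖fderiv ℝ φ z‖ₑ ^ 2) x
  calc ∫⁻ y, ‖φ y‖ₑ ^ 2 * ‖x - y‖ₑ⁻¹ ∂μ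
      = ∫⁻ z, ‖φ (z + x)‖ₑ ^ 2 * ‖z‖ₑ⁻¹ ∂μ := by
        rw [← lintegral_add_right_eq_self _ x]
        simp only [sub_add_cancel_right, enorm_neg]
    _ ≤ 3 * sobolevNorm (fun z ↦ φ (z + x)) μ ^ 2 :=
        lintegral_sq_enorm_mul_inv_enorm_le hE (hφ.comp (by fun_prop))
    _ = _ := by rw [htranslate]

end Hardy

section ThreeBody

open scoped Convolution
open ContinuousLinearMap (lsmul)

variable {E F G : Type*} [NormedAddCommGroup E] [MeasurableSpace E] [NormedAddCommGroup F]
  [NormedAddCommGroup G] [InnerProductSpace ℝ G]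

/-- The field `k ∗ |φ|²` generated by the density `|φ|²` through the vector kernel `k`. -/
def densityField (k : E → G) (φ : E → F) (μ : Measure E) : E → G :=
  (fun y ↦ ‖φ y‖ ^ 2) ⋆[lsmul ℝ ℝ, μ] k

/-- The real potential `‖k ∗ |φ|²‖² + 2 k ∗ ((k ∗ |φ|²) |φ|²)` by which the mean-field three-body
operator `w'` multiplies `φ`; the outer convolution pairs vectors by the inner product. -/
def threeBodyPotential (k : E → G) (φ : E → F) (μ : Measure E) (x : E) : ℝ :=
  ‖densityField k φ μ x‖ ^ 2
    + 2 * ((fun y ↦ ‖φ y‖ ^ 2 • densityField k φ μ y) ⋆[innerSL ℝ, μ] k) x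

variable [NormedSpace ℝ E] [FiniteDimensional ℝ E] [BorelSpace E] [InnerProductSpace ℝ F]
  [CompleteSpace F] {μ : Measure E} [μ.IsAddHaarMeasure] {k : E → G} {φ : E → F}

section Convolution

variable {G₁ G₂ G₃ : Type*} [NormedAddCommGroup G₁] [NormedSpace ℝ G₁] [NormedAddCommGroup G₂]
  [NormedSpace ℝ G₂] [NormedAddCommGroup G₃] [NormedSpace ℝ G₃] {L : G₁ →L[ℝ] G₂ →L[ℝ] G₃}
  {f : E → G₁} {k : E → G₂} {A : ℝ≥0∞}

lemma lintegral_enorm_convolution_integrand_le (hE : 2 ≤ Module.finrank ℝ E) (hL : ‖L‖ₑ ≤ 1)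
    (hf : ∀ y, ‖f y‖ₑ ≤ A * ‖φ y‖ₑ ^ 2) (hk : ∀ z, ‖k z‖ₑ ≤ ‖z‖ₑ⁻¹) (hφ : Differentiable ℝ φ)
    (x : E) : ∫⁻ y, ‖L (f y) (k (x - y))‖ₑ ∂μ ≤ A * (3 * sobolevNorm φ μ ^ 2) := by
  have hφ_meas : Measurable fun z ↦ ‖φ z‖ₑ := hφ.continuous.enorm.measurable
  calc ∫⁻ y, ‖L (f y) (k (x - y))‖ₑ ∂μ
      ≤ ∫⁻ y, A * (‖φ y‖ₑ ^ 2 * ‖x - y‖ₑ⁻¹) ∂μ := by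
        refine lintegral_mono fun y ↦ ?_
        grw [L.le_opENorm₂, hL, hf, hk, one_mul, mul_assoc]
    _ = A * ∫⁻ y, ‖φ y‖ₑ ^ 2 * ‖x - y‖ₑ⁻¹ ∂μ := lintegral_const_mul _ (by fun_prop)
    _ ≤ A * (3 * sobolevNorm φ μ ^ 2) := by
        grw [lintegral_sq_enorm_mul_inv_enorm_sub_le hE hφ x]

lemma convolutionExists_of_enorm_le (hE : 2 ≤ Module.finrank ℝ E) (hL : ‖L‖ₑ ≤ 1)
    (hf_meas : AEStronglyMeasurable f μ) (hk_meas : AEStronglyMeasurable k μ) (hA : A < ⊤)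
    (hf : ∀ y, ‖f y‖ₑ ≤ A * ‖φ y‖ₑ ^ 2) (hk : ∀ z, ‖k z‖ₑ ≤ ‖z‖ₑ⁻¹) (hφ : Differentiable ℝ φ)
    (hfin : sobolevNorm φ μ < ⊤) : ConvolutionExists f k L μ := fun x ↦
  ⟨hf_meas.convolution_integrand_snd L hk_meas x,
    (lintegral_enorm_convolution_integrand_le hE hL hf hk hφ x).trans_lt (by finiteness)⟩

lemma enorm_convolution_le (hE : 2 ≤ Module.finrank ℝ E) (hL : ‖L‖ₑ ≤ 1)
    (hf : ∀ y, ‖f y‖ₑ ≤ A * ‖φ y‖ₑ ^ 2) (hk : ∀ z, ‖k z‖ₑ ≤ ‖z‖ₑ⁻¹) (hφ : Differentiable ℝ φ)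
    (x : E) : ‖(f ⋆[L, μ] k) x‖ₑ ≤ A * (3 * sobolevNorm φ μ ^ 2) :=
  (enorm_integral_le_lintegral_enorm _).trans
    (lintegral_enorm_convolution_integrand_le hE hL hf hk hφ x)

end Convolution

lemma enorm_densityField_le (hE : 2 ≤ Module.finrank ℝ E) (hk : ∀ z, ‖k z‖ₑ ≤ ‖z‖ₑ⁻¹)
    (hφ : Differentiable ℝ φ) (x : E) :
    ‖densityField k φ μ x‖ₑ ≤ 3 * sobolevNorm φ μ ^ 2 := by
  simpa only [densityField, one_mul] using enorm_convolution_le (L := lsmul ℝ ℝ)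
    (f := fun y ↦ ‖φ y‖ ^ 2) (A := 1) (μ := μ) hE ContinuousLinearMap.opENorm_lsmul_le
    (fun y ↦ by simp [enorm_pow]) hk hφ x

lemma enorm_density_smul_densityField_le (hE : 2 ≤ Module.finrank ℝ E)
    (hk : ∀ z, ‖k z‖ₑ ≤ ‖z‖ₑ⁻¹) (hφ : Differentiable ℝ φ) (y : E) :
    ‖‖φ y‖ ^ 2 • densityField k φ μ y‖ₑ ≤ 3 * sobolevNorm φ μ ^ 2 * ‖φ y‖ₑ ^ 2 := by
  grw [enorm_smul, enorm_pow, enorm_norm, enorm_densityField_le hE hk hφ y, mul_comm]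

lemma enorm_innerSL_le_one : ‖innerSL ℝ (E := G)‖ₑ ≤ 1 := by
  rw [← ofReal_norm]
  exact ENNReal.ofReal_le_one.2 (norm_innerSL_le ℝ)

lemma convolutionExists_density (hE : 2 ≤ Module.finrank ℝ E) (hk_meas : AEStronglyMeasurable k μ)
    (hk : ∀ z, ‖k z‖ₑ ≤ ‖z‖ₑ⁻¹) (hφ : Differentiable ℝ φ) (hfin : sobolevNorm φ μ < ⊤) :
    ConvolutionExists (fun y ↦ ‖φ y‖ ^ 2) k (lsmul ℝ ℝ) μ :=
  convolutionExists_of_enorm_le (A := 1) hE ContinuousLinearMap.opENorm_lsmul_le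
    (hφ.continuous.norm.pow 2).aestronglyMeasurable hk_meas ENNReal.one_lt_top
    (fun y ↦ by simp [enorm_pow]) hk hφ hfin

lemma convolutionExists_density_smul_densityField (hE : 2 ≤ Module.finrank ℝ E)
    (hk_meas : AEStronglyMeasurable k μ) (hk : ∀ z, ‖k z‖ₑ ≤ ‖z‖ₑ⁻¹) (hφ : Differentiable ℝ φ)
    (hfin : sobolevNorm φ μ < ⊤) :
    ConvolutionExists (fun y ↦ ‖φ y‖ ^ 2 • densityField k φ μ y) k (innerSL ℝ) μ := by
  have hdensity_meas : AEStronglyMeasurable (fun y ↦ ‖φ y‖ ^ 2) μ :=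
    (hφ.continuous.norm.pow 2).aestronglyMeasurable
  have hfield_meas : AEStronglyMeasurable (densityField k φ μ) μ :=
    (hdensity_meas.convolution_integrand (lsmul ℝ ℝ) hk_meas).integral_prod_right'
  exact convolutionExists_of_enorm_le hE enorm_innerSL_le_one (hdensity_meas.smul hfield_meas)
    hk_meas (by finiteness) (enorm_density_smul_densityField_le hE hk hφ) hk hφ hfin

lemma enorm_threeBodyPotential_le (hE : 2 ≤ Module.finrank ℝ E) (hk : ∀ z, ‖k z‖ₑ ≤ ‖z‖ₑ⁻¹)
    (hφ : Differentiable ℝ φ) (x : E) :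
    ‖threeBodyPotential k φ μ x‖ₑ ≤ 27 * sobolevNorm φ μ ^ 4 := by
  set A := 3 * sobolevNorm φ μ ^ 2 with hA
  have hconv : ‖((fun y ↦ ‖φ y‖ ^ 2 • densityField k φ μ y) ⋆[innerSL ℝ, μ] k) x‖ₑ ≤ A * A :=
    enorm_convolution_le hE enorm_innerSL_le_one
      (enorm_density_smul_densityField_le hE hk hφ) hk hφ x
  have htwo : ‖(2 : ℝ)‖ₑ = 2 := by simp [← ofReal_norm]
  calc ‖threeBodyPotential k φ μ x‖ₑ ≤ A ^ 2 + 2 * (A * A) := by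
        grw [threeBodyPotential, enorm_add_le, enorm_pow, enorm_mul, enorm_norm, hconv, htwo,
          enorm_densityField_le hE hk hφ x]
    _ = 27 * sobolevNorm φ μ ^ 4 := by rw [hA]; ring

lemma eLpNorm_threeBodyPotential_smul_le (hE : 2 ≤ Module.finrank ℝ E)
    (hk : ∀ z, ‖k z‖ₑ ≤ ‖z‖ₑ⁻¹) (hφ : Differentiable ℝ φ) :
    eLpNorm (fun x ↦ threeBodyPotential k φ μ x • φ x) 2 μ ≤ 27 * sobolevNorm φ μ ^ 5 := by
  have hpointwise (x : E) :
      ‖threeBodyPotential k φ μ x • φ x‖ₑ ≤ 27 * sobolevNorm φ μ ^ 4 * ‖φ x‖ₑ := by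
    grw [enorm_smul, enorm_threeBodyPotential_le hE hk hφ x]
  calc eLpNorm (fun x ↦ threeBodyPotential k φ μ x • φ x) 2 μ
      ≤ 27 * sobolevNorm φ μ ^ 4 * eLpNorm φ 2 μ :=
        eLpNorm_le_mul_eLpNorm_of_ae_le_mul'' 2 hφ.continuous.aestronglyMeasurable
          (.of_forall hpointwise)
    _ ≤ 27 * sobolevNorm φ μ ^ 4 * sobolevNorm φ μ := by grw [eLpNorm_le_sobolevNorm]
    _ = 27 * sobolevNorm φ μ ^ 5 := by ring

theorem statement11_general [CompleteSpace G] (hE : 2 ≤ Module.finrank ℝ E)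
    (hk_meas : AEStronglyMeasurable k μ) (hk : ∀ z, ‖k z‖ₑ ≤ ‖z‖ₑ⁻¹) (hφ : Differentiable ℝ φ)
    (hfin : sobolevNorm φ μ < ⊤) :
    ConvolutionExists (fun y ↦ ‖φ y‖ ^ 2) k (lsmul ℝ ℝ) μ
      ∧ ConvolutionExists (fun y ↦ ‖φ y‖ ^ 2 • densityField k φ μ y) k (innerSL ℝ) μ
      ∧ eLpNorm (fun x ↦ threeBodyPotential k φ μ x • φ x) 2 μ ≤ 27 * sobolevNorm φ μ ^ 5 :=
  ⟨convolutionExists_density hE hk_meas hk hφ hfin,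
    convolutionExists_density_smul_densityField hE hk_meas hk hφ hfin,
    eLpNorm_threeBodyPotential_smul_le hE hk hφ⟩

end ThreeBody

section Plane

lemma norm_perp (x : E2) : ‖perp x‖ = ‖x‖ := by
  simp [perp, EuclideanSpace.norm_eq, Fin.sum_univ_two, add_comm]

lemma enorm_K_le_inv_enorm (R : ℝ) (x : E2) : ‖K R x‖ₑ ≤ ‖x‖ₑ⁻¹ := by
  obtain rfl | hx := eq_or_ne x 0
  · simp
  have hx_pos : 0 < ‖x‖ := norm_pos_iff.2 hx
  rw [← ofReal_norm, ← ofReal_norm, ← ENNReal.ofReal_inv_of_pos hx_pos]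
  apply ENNReal.ofReal_le_ofReal
  calc ‖K R x‖ = (max R ‖x‖ ^ 2)⁻¹ * ‖x‖ := by
        rw [K, norm_smul, norm_perp, Real.norm_of_nonneg (by positivity)]
    _ ≤ (‖x‖ ^ 2)⁻¹ * ‖x‖ := by
        gcongr
        exact le_max_right _ _
    _ = ‖x‖⁻¹ := by field_simp

lemma measurable_K (R : ℝ) : Measurable (K R) := by
  have hperp : Continuous perp := by
    unfold perp
    simp only [WithLp.equiv_symm_apply]
    fun_prop
  unfold K
  fun_prop

lemma threeBodyPotential_K (R : ℝ) (φ : E2 → ℂ) (x : E2) :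
    threeBodyPotential (K R) φ volume x
      = ‖convKs R (fun y ↦ ‖φ y‖ ^ 2) x‖ ^ 2
        + 2 * convKv R (fun y ↦ ‖φ y‖ ^ 2 • convKs R (fun y' ↦ ‖φ y'‖ ^ 2) y) x := by
  have hfield : densityField (K R) φ volume = convKs R (fun y ↦ ‖φ y‖ ^ 2) := rfl
  simp only [threeBodyPotential, hfield, convKv, real_inner_comm _ (K R _)]
  rfl

end Plane

/-- Estimate (2.25): there is `C > 0` such that for every `R ≥ 0` and every
`φ ∈ H¹(ℝ², ℂ)`, the function
`w'φ = ‖K_R ∗ |φ|²‖² φ + 2 (K_R ∗ ((K_R ∗ |φ|²)|φ|²)) φ` satisfies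
`‖w'φ‖₂ ≤ C ‖φ‖_{H¹}⁵`. -/
theorem statement11 :
    ∃ C : ℝ, 0 < C ∧ ∀ R : ℝ, 0 ≤ R →
      ∀ φ : E2 → ℂ, Differentiable ℝ φ → H1 φ < ⊤ →
        eLpNorm
            (fun x =>
              (↑(‖convKs R (fun y => ‖φ y‖ ^ 2) x‖ ^ 2) : ℂ) * φ x
                + 2 * (↑(convKv R
                    (fun y => ‖φ y‖ ^ 2 • convKs R (fun y' => ‖φ y'‖ ^ 2) y) x) : ℂ) * φ x)
            2 volume
          ≤ ENNReal.ofReal C * H1 φ ^ 5 := by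
  refine ⟨27, by norm_num, fun R _ φ hφ hfin ↦ ?_⟩
  have hgeneral := (statement11_general (by simp) (measurable_K R).aestronglyMeasurable
    (enorm_K_le_inv_enorm R) hφ hfin).2.2
  simpa [threeBodyPotential_K, add_mul, mul_assoc, sobolevNorm, H1] using hgeneral
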